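/- arXiv:2512.10109 — 3 statements merged into one kernel-verified Lean document; each statement's English description precedes it below -/
import Mathlib

section
/- In the N-player Moroccan procurement game, for every player i one has sup_{x_i ∈ [A,B]} inf_{x_{-i} ∈ [A,B]^{N−1}} g_i(x_i, x_{-i}) = 0 and inf_{x_{-i} ∈ [A,B]^{N−1}} sup_{x_i ∈ [A,B]} g_i(x_i, x_{-i}) = 1; in particular the two iterated optima differ. -/
/-!
Payoffs lie in `[0, 1]`, so it suffices to exhibit one good reply in each iterated optimum.

* `exists_payoff_eq_zero`: whatever bid `t` player `i` announces, the opponents can make it lose.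
  If `t ≥ E`, they all bid `A`: this pulls the reference price strictly below `t` while `A` stays
  below it. If `t < E`, they all bid `(t + E) / 2`, which lies above `t` and below the reference
  price.
* `exists_payoff_eq_one`: against any opposing bids with sum `S`, the reference price as a function
  of the bid `t` of player `i` has the fixed point `p = (S + N * E) / (2 * N - 1)`, which lies in
  `(A, B)`. For `t` slightly below `p` the reference price lies in `(t, p)`, and no opposing bid
  lies in `[t, p)`, so player `i` is the only winner.
-/

open scoped BigOperators

/-- Reference price of a bid profile in the `N`-player Moroccan procurement game. -/
noncomputable def refPrice (N : ℕ) (E : ℝ) (x : Fin N → ℝ) : ℝ :=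
  ((∑ i, x i) + N * E) / (2 * N)

open Classical in
/-- The set of winners: bidders with the largest bid `≤ P` if such a bid exists,
otherwise bidders with the smallest bid. -/
noncomputable def winners (N : ℕ) (E : ℝ) (x : Fin N → ℝ) : Set (Fin N) :=
  if ∃ j, x j ≤ refPrice N E x then
    {i | x i ≤ refPrice N E x ∧ ∀ j, x j ≤ refPrice N E x → x j ≤ x i}
  else
    {i | ∀ j, x i ≤ x j}

open Classical in
/-- Payoff of player `i`: the prize `1` shared equally among the winners. -/
noncomputable def payoff (N : ℕ) (E : ℝ) (i : Fin N) (x : Fin N → ℝ) : ℝ :=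
  if i ∈ winners N E x then 1 / ((winners N E x).ncard : ℝ) else 0

lemma payoff_nonneg (N : ℕ) (E : ℝ) (i : Fin N) (x : Fin N → ℝ) : 0 ≤ payoff N E i x := by
  unfold payoff
  split_ifs <;> positivity

lemma payoff_le_one (N : ℕ) (E : ℝ) (i : Fin N) (x : Fin N → ℝ) : payoff N E i x ≤ 1 := by
  unfold payoff
  split_ifs with h
  · have h1 : 1 ≤ (winners N E x).ncard :=
      (Set.ncard_pos (Set.toFinite _)).2 ⟨i, h⟩
    have h2 : (1 : ℝ) ≤ ((winners N E x).ncard : ℝ) := by exact_mod_cast h1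
    exact (div_le_one (by linarith)).2 h2
  · exact zero_le_one

lemma payoff_eq_one (N : ℕ) (E : ℝ) (i : Fin N) (x : Fin N → ℝ)
    (hi : x i ≤ refPrice N E x) (h : ∀ j, j ≠ i → x j ≤ refPrice N E x → x j < x i) :
    payoff N E i x = 1 := by
  have hw : winners N E x = {i} := by
    unfold winners
    rw [if_pos ⟨i, hi⟩]
    ext k
    simp only [Set.mem_ofPred_eq, Set.mem_singleton_iff]
    constructor
    · rintro ⟨hk, hk'⟩
      by_contra hne
      exact absurd (hk' i hi) (not_le.2 (h k hne hk))
    · rintro rfl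
      refine ⟨hi, fun j hj => ?_⟩
      by_cases hjk : j = k
      · rw [hjk]
      · exact (h j hjk hj).le
  simp [payoff, hw]

lemma payoff_eq_zero (N : ℕ) (E : ℝ) (i j : Fin N) (x : Fin N → ℝ)
    (hj : x j ≤ refPrice N E x) (h : refPrice N E x < x i ∨ x i < x j) :
    payoff N E i x = 0 := by
  have hw : i ∉ winners N E x := by
    unfold winners
    rw [if_pos ⟨j, hj⟩]
    rintro ⟨h1, h2⟩
    rcases h with h | h
    · linarith
    · linarith [h2 j hj]
  simp [payoff, hw]

lemma refPrice_update (N : ℕ) (E : ℝ) (i : Fin N) (x : Fin N → ℝ) (t : ℝ) :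
    refPrice N E (Function.update x i t)
      = (t + ∑ j ∈ Finset.univ \ {i}, x j + N * E) / (2 * N) := by
  rw [refPrice, Finset.sum_update_of_mem (Finset.mem_univ i)]

lemma card_others (N : ℕ) (hN : 2 ≤ N) (i : Fin N) :
    (((Finset.univ \ {i} : Finset (Fin N)).card : ℕ) : ℝ) = N - 1 := by
  rw [Finset.card_sdiff_of_subset (Finset.subset_univ _)]
  simp only [Finset.card_univ, Fintype.card_fin, Finset.card_singleton]
  rw [Nat.cast_sub (by omega), Nat.cast_one]

lemma exists_payoff_eq_zero (A E B : ℝ) (hAE : A < E) (hEB : E < B)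
    (N : ℕ) (hN : 2 ≤ N) (i : Fin N) (t : ℝ) (ht : t ∈ Set.Icc A B) :
    ∃ c ∈ Set.Icc A B, payoff N E i (Function.update (fun _ => c) i t) = 0 := by
  obtain ⟨hA, hB⟩ := ht
  have hN' : (2 : ℝ) ≤ N := by exact_mod_cast hN
  have : Nontrivial (Fin N) := Fin.nontrivial_iff_two_le.2 hN
  obtain ⟨j, hj⟩ := exists_ne i
  have hP : ∀ c : ℝ, refPrice N E (Function.update (fun _ => c) i t)
      = (t + (N - 1) * c + N * E) / (2 * N) := by
    intro c
    rw [refPrice_update, Finset.sum_const, nsmul_eq_mul, card_others N hN]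
  rcases le_or_gt E t with h | h
  · refine ⟨A, ⟨le_rfl, by linarith⟩, payoff_eq_zero N E i j _ ?_ (Or.inl ?_)⟩
    · rw [hP, Function.update_of_ne hj, le_div_iff₀ (by linarith)]
      nlinarith
    · rw [hP, Function.update_self, div_lt_iff₀ (by linarith)]
      nlinarith
  · refine ⟨(t + E) / 2, ⟨by linarith, by linarith⟩,
      payoff_eq_zero N E i j _ ?_ (Or.inr ?_)⟩
    · rw [hP, Function.update_of_ne hj, le_div_iff₀ (by linarith)]
      nlinarith
    · rw [Function.update_self, Function.update_of_ne hj]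
      linarith

lemma exists_payoff_eq_one (A E B : ℝ) (hAE : A < E) (hEB : E < B)
    (N : ℕ) (hN : 2 ≤ N) (i : Fin N) (x : Fin N → ℝ) (hx : ∀ j, x j ∈ Set.Icc A B) :
    ∃ t ∈ Set.Icc A B, payoff N E i (Function.update x i t) = 1 := by
  have hN' : (2 : ℝ) ≤ N := by exact_mod_cast hN
  have hSA : (N - 1) * A ≤ ∑ j ∈ Finset.univ \ {i}, x j := by
    rw [← card_others N hN i, ← nsmul_eq_mul]
    exact Finset.card_nsmul_le_sum _ _ _ fun j _ => (hx j).1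
  have hSB : ∑ j ∈ Finset.univ \ {i}, x j ≤ (N - 1) * B := by
    rw [← card_others N hN i, ← nsmul_eq_mul]
    exact Finset.sum_le_card_nsmul _ _ _ fun j _ => (hx j).2
  have hP := refPrice_update N E i x
  generalize (∑ j ∈ Finset.univ \ {i}, x j) = S at hSA hSB hP
  -- the fixed point of the reference price in the bid of player `i`
  obtain ⟨p, hp⟩ : ∃ p : ℝ, (2 * N - 1) * p = S + N * E :=
    ⟨(S + N * E) / (2 * N - 1), mul_div_cancel₀ _ (by linarith)⟩
  have hpA : A < p := by nlinarith
  have hpB : p < B := by nlinarith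
  have hev : ∀ᶠ t in nhdsWithin p (Set.Iio p), t < p ∧ A < t ∧ ∀ j, x j < p → x j < t := by
    refine Filter.Eventually.and self_mem_nhdsWithin (Filter.Eventually.and
      (nhdsWithin_le_nhds (lt_mem_nhds hpA)) (Filter.eventually_all.2 fun j => ?_))
    by_cases hj : x j < p
    · filter_upwards [nhdsWithin_le_nhds (lt_mem_nhds hj)] with t ht _ using ht
    · exact Filter.Eventually.of_forall fun t h => absurd h hj
  obtain ⟨t, htp, hAt, hgap⟩ := hev.exists
  have hlow : t ≤ refPrice N E (Function.update x i t) := by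
    rw [hP, le_div_iff₀ (by linarith)]
    nlinarith
  have hhigh : refPrice N E (Function.update x i t) < p := by
    rw [hP, div_lt_iff₀ (by linarith)]
    nlinarith
  refine ⟨t, ⟨hAt.le, by linarith⟩, payoff_eq_one N E i _ ?_ fun j hj hjP => ?_⟩
  · rwa [Function.update_self]
  · rw [Function.update_of_ne hj] at hjP ⊢
    rw [Function.update_self]
    exact hgap j (hjP.trans_lt hhigh)

/-- `sup_{x_i} inf_{x_{-i}} g_i = 0 < 1 = inf_{x_{-i}} sup_{x_i} g_i` :
the two iterated optima of the `N`-player Moroccan procurement game differ. -/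
theorem iterated_optima_differ (A E B : ℝ) (hAE : A < E) (hEB : E < B)
    (N : ℕ) (hN : 2 ≤ N) (i : Fin N) :
    (⨆ xi : Set.Icc A B, ⨅ xmi : Fin N → Set.Icc A B,
        payoff N E i (Function.update (fun j => (xmi j : ℝ)) i (xi : ℝ))) = 0 ∧
    (⨅ xmi : Fin N → Set.Icc A B, ⨆ xi : Set.Icc A B,
        payoff N E i (Function.update (fun j => (xmi j : ℝ)) i (xi : ℝ))) = 1 ∧
    (⨆ xi : Set.Icc A B, ⨅ xmi : Fin N → Set.Icc A B,
        payoff N E i (Function.update (fun j => (xmi j : ℝ)) i (xi : ℝ))) ≠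
    (⨅ xmi : Fin N → Set.Icc A B, ⨆ xi : Set.Icc A B,
        payoff N E i (Function.update (fun j => (xmi j : ℝ)) i (xi : ℝ))) := by
  have hne : Nonempty (Set.Icc A B) := ⟨⟨E, hAE.le, hEB.le⟩⟩
  have hsup : (⨆ xi : Set.Icc A B, ⨅ xmi : Fin N → Set.Icc A B,
      payoff N E i (Function.update (fun j => (xmi j : ℝ)) i (xi : ℝ))) = 0 := by
    refine (iSup_congr fun xi => ?_).trans ciSup_const
    obtain ⟨c, hc, h0⟩ := exists_payoff_eq_zero A E B hAE hEB N hN i xi xi.2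
    refine le_antisymm ?_ (le_ciInf fun _ => payoff_nonneg _ _ _ _)
    refine (ciInf_le ⟨0, ?_⟩ (fun _ => ⟨c, hc⟩)).trans h0.le
    rintro _ ⟨y, rfl⟩
    exact payoff_nonneg _ _ _ _
  have hinf : (⨅ xmi : Fin N → Set.Icc A B, ⨆ xi : Set.Icc A B,
      payoff N E i (Function.update (fun j => (xmi j : ℝ)) i (xi : ℝ))) = 1 := by
    refine (iInf_congr fun xmi => ?_).trans ciInf_const
    obtain ⟨t, ht, h1⟩ := exists_payoff_eq_one A E B hAE hEB N hN i
      (fun j => (xmi j : ℝ)) (fun j => (xmi j).2)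
    refine le_antisymm (ciSup_le fun _ => payoff_le_one _ _ _ _) ?_
    refine h1.ge.trans (le_ciSup (f := fun xi : Set.Icc A B =>
      payoff N E i (Function.update (fun j => (xmi j : ℝ)) i (xi : ℝ))) ⟨1, ?_⟩ ⟨t, ht⟩)
    rintro _ ⟨y, rfl⟩
    exact payoff_le_one _ _ _ _
  exact ⟨hsup, hinf, by rw [hsup, hinf]; exact zero_ne_one⟩
end

section
/- Let ν* be the probability measure on [A,B] with Lebesgue density h(t) = 3/(4(E−A)) for t ∈ [A, A₁), h(t) = 9/(4(E−A)) for t ∈ [A₁, A₂), and h(t) = 0 otherwise. Then for every x ∈ [A,B], ∫ g(x,y) dν*(y) ≤ 1/2, with equality ∫ g(x,y) dν*(y) = 1/2 for every x ∈ [A, A₂]. -/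
/-!
Write `x = E - u`, `y = E - v` and `d = E - A`. For `v > 0` and `u > 0` the bid `x` wins exactly when
`u < v ≤ 3u` or `v < u / 3`, ties (`u = v`) being a null event; for `u ≤ 0` it never wins.
Integrating the density over the winning set gives, in the three regimes,

* `d/3 ≤ u ≤ d`: `(d - u) * 3/(4d) + (u/3 - d/9) * 9/(4d) = 1/2`;
* `d/9 ≤ u ≤ d/3`: `(3u - d/3) * 3/(4d) + (d/3 - u) * 9/(4d) = 1/2`;
* `u < d/9`: the winning set meets the support inside `[A₁, A₂)`, which has mass `1/2`.

In each regime the integrand is compared with a combination of indicators of two half-open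
intervals, whose integral is `integral_two_steps`.
-/

open MeasureTheory

/-- Reference price in the two-player Moroccan procurement game. -/
noncomputable def P2 (E x y : ℝ) : ℝ := (x + y + 2 * E) / 4

/-- Player 1's payoff in the two-player Moroccan procurement game. -/
noncomputable def g2 (E x y : ℝ) : ℝ :=
  if (y < x ∧ x ≤ P2 E x y) ∨ (P2 E x y ≤ x ∧ x < y) ∨ (x ≤ P2 E x y ∧ P2 E x y < y) then 1
  else if x = y then 1 / 2
  else 0

/-- Density of the uniform-based equilibrium strategy:
`3/(4(E-A))` on `[a₁, a₂)`, `9/(4(E-A))` on `[a₂, a₃)` (here `a₁ = A`,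
`a₂ = A₁ = (A+2E)/3`, `a₃ = A₂ = (A+8E)/9`), and `0` elsewhere. -/
noncomputable def unifDens (A E a₁ a₂ : ℝ) (t : ℝ) : ℝ :=
  if t ∈ Set.Ico A a₁ then 3 / (4 * (E - A))
  else if t ∈ Set.Ico a₁ a₂ then 9 / (4 * (E - A))
  else 0

/-- The measure on `ℝ` with Lebesgue density `unifDens`. -/
noncomputable def unifMeas (A E a₁ a₂ : ℝ) : Measure ℝ :=
  volume.withDensity (fun t => ENNReal.ofReal (unifDens A E a₁ a₂ t))

lemma integrable_step (a b c : ℝ) :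
    Integrable ((Set.Ico a b).indicator fun _ => c) (volume : Measure ℝ) :=
  (integrable_indicator_iff measurableSet_Ico).2 (integrableOn_const (by simp))

lemma integral_step {a b : ℝ} (h : a ≤ b) (c : ℝ) :
    ∫ y, (Set.Ico a b).indicator (fun _ => c) y = (b - a) * c := by
  rw [integral_indicator measurableSet_Ico, setIntegral_const, smul_eq_mul,
    Real.volume_real_Ico_of_le h]

lemma integral_two_steps {a b p q : ℝ} (hab : a ≤ b) (hpq : p ≤ q) (c e : ℝ) :
    ∫ y, ((Set.Ico a b).indicator (fun _ => c) y + (Set.Ico p q).indicator (fun _ => e) y)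
      = (b - a) * c + (q - p) * e := by
  rw [integral_add (integrable_step a b c) (integrable_step p q e), integral_step hab,
    integral_step hpq]

lemma unifDens_nonneg {A E : ℝ} (hAE : A < E) (a₁ a₂ t : ℝ) : 0 ≤ unifDens A E a₁ a₂ t := by
  have h : 0 < E - A := sub_pos.2 hAE
  unfold unifDens
  split_ifs <;> positivity

lemma measurable_unifDens (A E a₁ a₂ : ℝ) : Measurable (unifDens A E a₁ a₂) :=
  Measurable.ite measurableSet_Ico measurable_const
    (Measurable.ite measurableSet_Ico measurable_const measurable_const)

lemma unifDens_eq_steps (A E a₁ a₂ t : ℝ) :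
    unifDens A E a₁ a₂ t = (Set.Ico A a₁).indicator (fun _ => 3 / (4 * (E - A))) t
      + (Set.Ico a₁ a₂).indicator (fun _ => 9 / (4 * (E - A))) t := by
  simp only [unifDens, Set.indicator, Set.mem_Ico]
  split_ifs <;> first | (exfalso; grind) | simp

lemma integral_unifMeas {A E : ℝ} (hAE : A < E) (a₁ a₂ : ℝ) (f : ℝ → ℝ) :
    ∫ y, f y ∂(unifMeas A E a₁ a₂) = ∫ y, unifDens A E a₁ a₂ y * f y := by
  unfold unifMeas
  rw [integral_withDensity_eq_integral_toReal_smul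
    (measurable_unifDens A E a₁ a₂).ennreal_ofReal (by simp)]
  simp only [ENNReal.toReal_ofReal (unifDens_nonneg hAE a₁ a₂ _), smul_eq_mul]

lemma isProbabilityMeasure_unifMeas {A E : ℝ} (hAE : A < E) :
    IsProbabilityMeasure (unifMeas A E ((A + 2 * E) / 3) ((A + 8 * E) / 9)) := by
  have h : E - A ≠ 0 := (sub_pos.2 hAE).ne'
  constructor
  rw [unifMeas, withDensity_apply _ MeasurableSet.univ, Measure.restrict_univ,
    ← ofReal_integral_eq_lintegral_ofReal]
  · simp only [unifDens_eq_steps]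
    rw [integral_two_steps (by linarith) (by linarith), ENNReal.ofReal_eq_one]
    field_simp
    ring
  · simp only [funext (unifDens_eq_steps A E _ _)]
    exact (integrable_step _ _ _).add (integrable_step _ _ _)
  · exact Filter.Eventually.of_forall (unifDens_nonneg hAE _ _)

lemma g2_nonneg (E x y : ℝ) : 0 ≤ g2 E x y := by
  unfold g2
  split_ifs <;> norm_num

/-- Winning condition against an opponent bid `y < E` when there is no tie. For `x ≥ E` the
condition on the right fails as well, since then `y < E ≤ 3 * x - 2 * E` and
`y < E ≤ (2 * E + x) / 3`. -/
lemma g2_eq_ite {E x y : ℝ} (hy : y < E) (hxy : y ≠ x) :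
    g2 E x y = if (3 * x - 2 * E ≤ y ∧ y < x) ∨ (2 * E + x) / 3 < y then 1 else 0 := by
  unfold g2 P2
  rw [if_neg hxy.symm]
  congr 1
  apply propext
  constructor
  · rintro (⟨h1, h2⟩ | ⟨h1, h2⟩ | ⟨h1, h2⟩)
    · left; constructor <;> linarith
    · exfalso; linarith
    · right; linarith
  · rintro (⟨h1, h2⟩ | h)
    · left; constructor <;> linarith
    · right; right; constructor <;> linarith

/-- Regime of low bids, `x ∈ [A, A₁]`. -/
lemma payoff_low {A E x : ℝ} (hAE : A < E) (hx : A ≤ x) (hx' : x ≤ (A + 2 * E) / 3) :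
    ∫ y, g2 E x y ∂(unifMeas A E ((A + 2 * E) / 3) ((A + 8 * E) / 9)) = 1 / 2 := by
  have h : E - A ≠ 0 := (sub_pos.2 hAE).ne'
  rw [integral_unifMeas hAE]
  have key : ∀ᵐ y : ℝ, unifDens A E ((A + 2 * E) / 3) ((A + 8 * E) / 9) y * g2 E x y
      = (Set.Ico A x).indicator (fun _ => 3 / (4 * (E - A))) y
        + (Set.Ico ((2 * E + x) / 3) ((A + 8 * E) / 9)).indicator
          (fun _ => 9 / (4 * (E - A))) y := by
    -- `y = (2 * E + x) / 3` loses but lies in the half-open interval used for the upper winning set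
    filter_upwards [Measure.ae_ne volume x, Measure.ae_ne volume ((2 * E + x) / 3)]
      with y h1 h2
    by_cases hy : y < E
    · rw [g2_eq_ite hy h1]
      generalize h3 : 3 / (4 * (E - A)) = c
      generalize h9 : 9 / (4 * (E - A)) = e
      simp only [unifDens, Set.indicator, Set.mem_Ico, h3, h9]
      clear h3 h9
      grind
    · simp only [unifDens, Set.indicator, Set.mem_Ico]
      grind
  rw [integral_congr_ae key, integral_two_steps (by linarith) (by linarith)]
  field_simp
  ring

/-- Regime of middle bids, `x ∈ [A₁, A₂]`. -/
lemma payoff_mid {A E x : ℝ} (hAE : A < E) (hx : (A + 2 * E) / 3 ≤ x)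
    (hx' : x ≤ (A + 8 * E) / 9) :
    ∫ y, g2 E x y ∂(unifMeas A E ((A + 2 * E) / 3) ((A + 8 * E) / 9)) = 1 / 2 := by
  have h : E - A ≠ 0 := (sub_pos.2 hAE).ne'
  rw [integral_unifMeas hAE]
  have key : ∀ᵐ y : ℝ, unifDens A E ((A + 2 * E) / 3) ((A + 8 * E) / 9) y * g2 E x y
      = (Set.Ico (3 * x - 2 * E) ((A + 2 * E) / 3)).indicator (fun _ => 3 / (4 * (E - A))) y
        + (Set.Ico ((A + 2 * E) / 3) x).indicator (fun _ => 9 / (4 * (E - A))) y := by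
    filter_upwards [Measure.ae_ne volume x] with y h1
    by_cases hy : y < E
    · rw [g2_eq_ite hy h1]
      generalize h3 : 3 / (4 * (E - A)) = c
      generalize h9 : 9 / (4 * (E - A)) = e
      simp only [unifDens, Set.indicator, Set.mem_Ico, h3, h9]
      clear h3 h9
      grind
    · simp only [unifDens, Set.indicator, Set.mem_Ico]
      grind
  rw [integral_congr_ae key, integral_two_steps (by linarith) (by linarith)]
  field_simp
  ring

/-- Regime of high bids, `x > A₂`: such a bid only ever wins against `y ∈ [A₁, A₂)`. -/
lemma payoff_high {A E x : ℝ} (hAE : A < E) (hx : (A + 8 * E) / 9 < x) :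
    ∫ y, g2 E x y ∂(unifMeas A E ((A + 2 * E) / 3) ((A + 8 * E) / 9)) ≤ 1 / 2 := by
  have h : 0 < E - A := sub_pos.2 hAE
  rw [integral_unifMeas hAE]
  have key : ∀ᵐ y : ℝ, unifDens A E ((A + 2 * E) / 3) ((A + 8 * E) / 9) y * g2 E x y
      ≤ (Set.Ico ((A + 2 * E) / 3) ((A + 8 * E) / 9)).indicator
          (fun _ => 9 / (4 * (E - A))) y := by
    filter_upwards [Measure.ae_ne volume x] with y h1
    have he : 0 ≤ 9 / (4 * (E - A)) := by positivity
    by_cases hy : y < E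
    · rw [g2_eq_ite hy h1]
      generalize h3 : 3 / (4 * (E - A)) = c
      generalize h9 : 9 / (4 * (E - A)) = e at he
      simp only [unifDens, Set.indicator, Set.mem_Ico, h3, h9]
      clear h3 h9
      split_ifs <;> first | linarith | (exfalso; grind)
    · simp only [unifDens, Set.indicator, Set.mem_Ico]
      split_ifs <;> linarith
  refine (integral_mono_of_nonneg (Filter.Eventually.of_forall fun y =>
    mul_nonneg (unifDens_nonneg hAE _ _ y) (g2_nonneg E x y)) (integrable_step _ _ _) key).trans
    (le_of_eq ?_)
  rw [integral_step (by linarith)]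
  field_simp
  ring

/-- Against the mixed strategy `ν*` with density `3/(4(E-A))` on `[A, A₁)` and
`9/(4(E-A))` on `[A₁, A₂)`, player 1's expected payoff is at most `1/2`,
with equality for every bid `x ∈ [A, A₂]`. -/
theorem expected_payoff_against_nuStar (A E B : ℝ) (hAE : A < E) (hEB : E < B)
    (A₁ A₂ : ℝ) (hA₁ : A₁ = (A + 2 * E) / 3) (hA₂ : A₂ = (A + 8 * E) / 9) :
    IsProbabilityMeasure (unifMeas A E A₁ A₂) ∧
    (∀ x ∈ Set.Icc A B, ∫ y, g2 E x y ∂(unifMeas A E A₁ A₂) ≤ 1 / 2) ∧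
    (∀ x ∈ Set.Icc A A₂, ∫ y, g2 E x y ∂(unifMeas A E A₁ A₂) = 1 / 2) := by
  subst hA₁ hA₂
  have heq : ∀ x ∈ Set.Icc A ((A + 8 * E) / 9),
      ∫ y, g2 E x y ∂(unifMeas A E ((A + 2 * E) / 3) ((A + 8 * E) / 9)) = 1 / 2 := by
    rintro x ⟨h1, h2⟩
    rcases le_total x ((A + 2 * E) / 3) with h | h
    · exact payoff_low hAE h1 h
    · exact payoff_mid hAE h h2
  refine ⟨isProbabilityMeasure_unifMeas hAE, fun x hx => ?_, heq⟩
  rcases le_or_gt x ((A + 8 * E) / 9) with h | h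
  · exact (heq x ⟨hx.1, h⟩).le
  · exact payoff_high hAE h
end

section
/- Fix p ∈ (0, 1/2]. Let Ã = (2E + p(1−p)A)/((2−p)(p+1)), C = [ln( p(1−p) / ((2−p)(p+1)) )]^{−1}, and define f*(t) = C/(t−E) for t ∈ [A, Ã] and f*(t) = 0 otherwise; let v(p) = ln((1−p)/(2−p)) / ln( p(1−p) / ((2−p)(p+1)) ). Then: (i) f* is a probability density on [A,B]; (ii) for every x ∈ [A,B], ∫ g_p(x,y) f*(y) dy ≤ v(p); (iii) for every y ∈ [A,B], ∫ g_p(x,y) f*(x) dx ≥ v(p); (iv) ∫∫ g_p(x,y) f*(x) f*(y) dx dy = v(p). Consequently the pair of measures with density f* is a mixed-strategy Nash equilibrium of the weighted (p,1−p) game, whose value is v(p). -/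
/-!
Write `u = E - x`, `v = E - y` for the distances of the bids below `E`, `a = E - A`,
`k = (2 - p) / (1 - p) > 1` and `m = p / (1 + p) < 1`. For `u, v > 0`, player 1 wins exactly when
`u < v ≤ k u` or `v < m u` (`gp_ne_zero`, `gp_eq_one_of_lt`, `gp_eq_one_of_mul_lt`), so the game is
invariant under scaling of the distances. The law with density `f*` is, in the distance coordinate,
the log-uniform law on `[m a / k, a]`: an interval `[s, t]` inside it has mass
`(log t - log s) / (log k - log m)` (`fstarMeas_Icc`).

Against this law, a bid at distance `u` wins on `(u, k u]` and on `(0, m u)`, cut off by the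
support. Either `k u ≤ a`, and then at most `(u, k u]` contributes, with mass at most that of
`log k`; or `k u > a`, and the two pieces `(u, a]` and `[m a / k, m u)` have total logarithmic
length `log a - log u + log (m u) - log (m a / k) = log k` again (`integral_gp_le`). The same
computation with the roles exchanged gives the lower bound (`le_integral_gp`). All the statements
about measures follow by integrating these pointwise bounds, with Fubini for the lower one; the
equality at `(f*, f*)` is the combination of the two bounds.
-/

open MeasureTheory

/-- Reference price in the weighted `(p, 1−p)` two-player game. -/
noncomputable def Pp (E p x y : ℝ) : ℝ := (p * x + (1 - p) * y + E) / 2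

/-- Player 1's payoff in the weighted `(p, 1−p)` two-player game. -/
noncomputable def gp (E p x y : ℝ) : ℝ :=
  if (y < x ∧ x ≤ Pp E p x y) ∨ (Pp E p x y ≤ x ∧ x < y) ∨
      (x ≤ Pp E p x y ∧ Pp E p x y < y) then 1
  else if x = y then p
  else 0

/-- Expected payoff of player 1 in the mixed extension of the weighted game. -/
noncomputable def Gp (E p : ℝ) (μ ν : Measure ℝ) : ℝ := ∫ x, ∫ y, gp E p x y ∂ν ∂μ

/-- `Ã = (2E + p(1−p)A)/((2−p)(p+1))`. -/
noncomputable def Atil (A E p : ℝ) : ℝ := (2 * E + p * (1 - p) * A) / ((2 - p) * (p + 1))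

/-- `C = [ln( p(1−p)/((2−p)(p+1)) )]⁻¹`. -/
noncomputable def Cconst (p : ℝ) : ℝ := (Real.log (p * (1 - p) / ((2 - p) * (p + 1))))⁻¹

/-- The equilibrium density `f*(t) = C/(t−E)` on `[A, Ã]`, `0` elsewhere. -/
noncomputable def fstar (A E p t : ℝ) : ℝ :=
  if t ∈ Set.Icc A (Atil A E p) then Cconst p / (t - E) else 0

/-- The value `v(p) = ln((1−p)/(2−p)) / ln( p(1−p)/((2−p)(p+1)) )`. -/
noncomputable def vval (p : ℝ) : ℝ :=
  Real.log ((1 - p) / (2 - p)) / Real.log (p * (1 - p) / ((2 - p) * (p + 1)))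

/-- The measure with Lebesgue density `f*`. -/
noncomputable def fstarMeas (A E p : ℝ) : Measure ℝ :=
  volume.withDensity (fun t => ENNReal.ofReal (fstar A E p t))

section

variable {A E p : ℝ}

/-! ### The payoff function -/

lemma gp_nonneg (hp : 0 < p) (x y : ℝ) : 0 ≤ gp E p x y := by
  unfold gp
  split_ifs <;> positivity

lemma gp_le_one (hp : p ≤ 1 / 2) (x y : ℝ) : gp E p x y ≤ 1 := by
  unfold gp
  split_ifs <;> linarith

lemma measurable_gp : Measurable (fun z : ℝ × ℝ => gp E p z.1 z.2) := by
  unfold gp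
  have h1 : Measurable (fun z : ℝ × ℝ => Pp E p z.1 z.2) := by
    unfold Pp
    fun_prop
  refine Measurable.ite ?_ measurable_const (Measurable.ite ?_ measurable_const measurable_const)
  · refine MeasurableSet.union ?_ (MeasurableSet.union ?_ ?_)
    · exact (measurableSet_lt measurable_snd measurable_fst).inter
        (measurableSet_le measurable_fst h1)
    · exact (measurableSet_le h1 measurable_fst).inter
        (measurableSet_lt measurable_fst measurable_snd)
    · exact (measurableSet_le measurable_fst h1).inter (measurableSet_lt h1 measurable_snd)
  · exact measurableSet_eq_fun measurable_fst measurable_snd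

/-- Against an opponent below `E`, player 1 gets nothing outside the two winning ranges
`u ≤ v ≤ k u` and `v < m u` of the opponent's distance `v = E - y`. -/
lemma gp_ne_zero (h0 : 0 < p) (h1 : p ≤ 1 / 2) {x y : ℝ} (hy : y < E) (h : gp E p x y ≠ 0) :
    x < E ∧ ((E - x ≤ E - y ∧ E - y ≤ (2 - p) / (1 - p) * (E - x)) ∨
      E - y < p / (1 + p) * (E - x)) := by
  have hk : E - y ≤ (2 - p) / (1 - p) * (E - x) ↔ (E - y) * (1 - p) ≤ (2 - p) * (E - x) := by
    rw [div_mul_eq_mul_div, le_div_iff₀ (by linarith)]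
  have hm : E - y < p / (1 + p) * (E - x) ↔ (E - y) * (1 + p) < p * (E - x) := by
    rw [div_mul_eq_mul_div, lt_div_iff₀ (by linarith)]
  rw [hk, hm]
  unfold gp Pp at h
  split_ifs at h with h2 h3
  · rcases h2 with ⟨h2, h3⟩ | ⟨h2, h3⟩ | ⟨h2, h3⟩
    · refine ⟨by nlinarith, Or.inl ⟨by linarith, by nlinarith⟩⟩
    · exfalso
      nlinarith
    · refine ⟨by nlinarith, Or.inr (by nlinarith)⟩
  · subst h3
    exact ⟨hy, Or.inl ⟨le_rfl, by nlinarith⟩⟩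
  · exact absurd rfl h

lemma gp_eq_one_of_lt (h1 : p ≤ 1 / 2) {x y : ℝ} (h : E - x < E - y)
    (h' : E - y ≤ (2 - p) / (1 - p) * (E - x)) : gp E p x y = 1 := by
  rw [div_mul_eq_mul_div, le_div_iff₀ (by linarith)] at h'
  unfold gp Pp
  rw [if_pos]
  exact Or.inl ⟨by linarith, by linarith⟩

lemma gp_eq_one_of_mul_lt (h0 : 0 < p) (h1 : p ≤ 1 / 2) {x y : ℝ} (hx : x < E)
    (h' : E - y < p / (1 + p) * (E - x)) : gp E p x y = 1 := by
  rw [div_mul_eq_mul_div, lt_div_iff₀ (by linarith)] at h'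
  unfold gp Pp
  rw [if_pos]
  refine Or.inr (Or.inr ⟨?_, by linarith⟩)
  rcases le_or_gt E y with h | h
  · nlinarith
  · nlinarith

/-! ### Payoffs against a log-uniform law -/

/-- Upper bound on an expected payoff: `S` contains, within the support, all points of nonzero
payoff. -/
lemma integral_le_measureReal {M : Measure ℝ} [IsProbabilityMeasure M] {g : ℝ → ℝ}
    (hg : ∀ y, g y ≤ 1) (hg0 : ∀ y, 0 ≤ g y) {I S : Set ℝ} (hI : ∀ᵐ y ∂M, y ∈ I)
    (hS : MeasurableSet S) (h : ∀ y ∈ I, g y ≠ 0 → y ∈ S) : ∫ y, g y ∂M ≤ M.real S := by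
  rw [← integral_indicator_one hS]
  refine integral_mono_of_nonneg (Filter.Eventually.of_forall hg0)
    ((integrable_const (1 : ℝ)).indicator hS) ?_
  filter_upwards [hI] with y hy
  by_cases hyS : y ∈ S
  · simpa [hyS] using hg y
  · have : g y = 0 := by
      by_contra hc
      exact hyS (h y hy hc)
    simp [hyS, this]

lemma measureReal_le_integral {M : Measure ℝ} [IsProbabilityMeasure M] {g : ℝ → ℝ}
    (hg : ∀ y, g y ≤ 1) (hg0 : ∀ y, 0 ≤ g y) (hgm : Measurable g) {S : Set ℝ}
    (hS : MeasurableSet S) (h : ∀ y ∈ S, g y = 1) : M.real S ≤ ∫ y, g y ∂M := by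
  rw [← integral_indicator_one hS]
  refine integral_mono_of_nonneg (Filter.Eventually.of_forall fun y => ?_) ?_
    (Filter.Eventually.of_forall fun y => ?_)
  · exact Set.indicator_nonneg (fun _ _ => zero_le_one) y
  · refine Integrable.of_bound hgm.aestronglyMeasurable 1 (Filter.Eventually.of_forall fun y => ?_)
    rw [Real.norm_eq_abs, abs_of_nonneg (hg0 y)]
    exact hg y
  · by_cases hyS : y ∈ S
    · simp [hyS, h y hyS]
    · simpa [hyS] using hg0 y

/-- `M` is the log-uniform law on `[m a / k, a]` in the distance coordinate `E - t`, where `L` is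
the logarithmic length of that interval. -/
structure LogUniform (M : Measure ℝ) (E a k m L : ℝ) : Prop where
  prob : IsProbabilityMeasure M
  ae_mem : ∀ᵐ y ∂M, y ∈ Set.Icc (E - a) (E - m * a / k)
  icc : ∀ s t, m * a / k ≤ s → s ≤ t → t ≤ a →
    M.real (Set.Icc (E - t) (E - s)) = (Real.log t - Real.log s) / L
  ioo : ∀ s t, m * a / k ≤ s → s ≤ t → t ≤ a →
    M.real (Set.Ioo (E - t) (E - s)) = (Real.log t - Real.log s) / L

/-- No bid at distance at most `a` earns more than `log k / L` against the log-uniform law. -/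
lemma integral_gp_le (h0 : 0 < p) (h1 : p ≤ 1 / 2) {M : Measure ℝ} {a k m L : ℝ}
    (ha : 0 < a) (hk : k = (2 - p) / (1 - p)) (hm : m = p / (1 + p)) (hk1 : 1 < k) (hm0 : 0 < m)
    (hm1 : m < 1) (hL : L = Real.log k - Real.log m) (hM : LogUniform M E a k m L)
    {x : ℝ} (hx : E - x ≤ a) : ∫ y, gp E p x y ∂M ≤ Real.log k / L := by
  have := hM.prob
  have hlk : 0 < Real.log k := Real.log_pos hk1
  have hlm : Real.log m < 0 := Real.log_neg hm0 hm1
  have hL0 : 0 < L := by linarith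
  have hk0 : 0 < k := by linarith
  have hr0 : 0 < m * a / k := by positivity
  have hlr : Real.log (m * a / k) = Real.log m + Real.log a - Real.log k := by
    rw [Real.log_div (by positivity) (by positivity), Real.log_mul (by positivity) (by positivity)]
  have hra : m * a / k ≤ a / k := by
    gcongr
    nlinarith
  have hrk : m * a / k * k = m * a := by field_simp
  have hak : a / k ≤ a := div_le_self ha.le hk1.le
  have key : ∀ S : Set ℝ, MeasurableSet S → (∀ y ∈ Set.Icc (E - a) (E - m * a / k),
      x < E → ((E - x ≤ E - y ∧ E - y ≤ k * (E - x)) ∨ E - y < m * (E - x)) → y ∈ S) →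
      ∫ y, gp E p x y ∂M ≤ M.real S := by
    intro S hS h
    refine integral_le_measureReal (gp_le_one h1 x) (gp_nonneg h0 x) hM.ae_mem hS ?_
    intro y hy hne
    have := gp_ne_zero h0 h1 (by linarith [hy.2]) hne
    rw [← hk, ← hm] at this
    exact h y hy this.1 this.2
  rcases le_or_gt (E - x) 0 with hx0 | hx0
  · refine (key ∅ MeasurableSet.empty fun y _ hxE _ => by linarith).trans ?_
    simp only [measureReal_empty]
    positivity
  rcases le_or_gt (k * (E - x)) a with hka | hka
  · have hmu : m * (E - x) ≤ m * a / k := by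
      rw [le_div_iff₀ hk0]
      nlinarith
    -- only the range `u ≤ v ≤ k u` meets the support; its lower end may lie below the support
    rcases le_or_gt (m * a / k) (E - x) with hu | hu
    · refine (key (Set.Icc (E - k * (E - x)) (E - (E - x))) measurableSet_Icc ?_).trans ?_
      · rintro y ⟨hy1, hy2⟩ - (⟨h, h'⟩ | h)
        · exact ⟨by linarith, by linarith⟩
        · exact ⟨by nlinarith, by nlinarith⟩
      · rw [hM.icc _ _ hu (by nlinarith) hka, Real.log_mul hk0.ne' hx0.ne']
        apply le_of_eq
        ring
    · rcases le_or_gt (k * (E - x)) (m * a / k) with hku | hku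
      · refine (key (Set.Icc (E - m * a / k) (E - m * a / k)) measurableSet_Icc ?_).trans ?_
        · rintro y ⟨hy1, hy2⟩ - (⟨h, h'⟩ | h)
          · exact ⟨by linarith, by linarith⟩
          · exact ⟨by nlinarith, by nlinarith⟩
        · rw [hM.icc _ _ le_rfl le_rfl (by linarith), sub_self, zero_div]
          positivity
      · refine (key (Set.Icc (E - k * (E - x)) (E - m * a / k)) measurableSet_Icc ?_).trans ?_
        · rintro y ⟨hy1, hy2⟩ - (⟨h, h'⟩ | h)
          · exact ⟨by linarith, by linarith⟩
          · exact ⟨by nlinarith, by nlinarith⟩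
        · rw [hM.icc _ _ le_rfl hku.le hka, Real.log_mul hk0.ne' hx0.ne']
          have := Real.log_le_log hx0 hu.le
          gcongr
          linarith
  · have hmu : m * a / k ≤ m * (E - x) := by
      rw [div_le_iff₀ hk0]
      nlinarith
    have hau : a / k ≤ E - x := by
      rw [div_le_iff₀ hk0]
      nlinarith
    refine (key (Set.Icc (E - a) (E - (E - x)) ∪ Set.Icc (E - m * (E - x)) (E - m * a / k))
      (measurableSet_Icc.union measurableSet_Icc) ?_).trans ?_
    · rintro y ⟨hy1, hy2⟩ - (⟨h, h'⟩ | h)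
      · exact Or.inl ⟨by linarith, by linarith⟩
      · exact Or.inr ⟨by linarith, by linarith⟩
    · refine (measureReal_union_le _ _).trans ?_
      rw [hM.icc _ _ (by linarith) hx le_rfl, hM.icc _ _ le_rfl hmu (by nlinarith),
        Real.log_mul hm0.ne' hx0.ne', hlr]
      apply le_of_eq
      ring

/-- The log-uniform law secures player 1 at least `log k / L` against every bid at
distance at most `a`. The cases are the positions of `v = E - y` relative to `m² a / k < m a / k < m a`. -/
lemma le_integral_gp (h0 : 0 < p) (h1 : p ≤ 1 / 2) {M : Measure ℝ} {a k m L : ℝ}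
    (ha : 0 < a) (hk : k = (2 - p) / (1 - p)) (hm : m = p / (1 + p)) (hk1 : 1 < k) (hm0 : 0 < m)
    (hm1 : m < 1) (hL : L = Real.log k - Real.log m) (hM : LogUniform M E a k m L)
    {y : ℝ} (hy : E - y ≤ a) : Real.log k / L ≤ ∫ x, gp E p x y ∂M := by
  have := hM.prob
  have hlk : 0 < Real.log k := Real.log_pos hk1
  have hlm : Real.log m < 0 := Real.log_neg hm0 hm1
  have hL0 : 0 < L := by linarith
  have hk0 : 0 < k := by linarith
  have hr0 : 0 < m * a / k := by positivity
  have hlr : Real.log (m * a / k) = Real.log m + Real.log a - Real.log k := by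
    rw [Real.log_div (by positivity) (by positivity), Real.log_mul (by positivity) (by positivity)]
  have hrm : m * a / k ≤ m * a := div_le_self (by positivity) hk1.le
  have hrk : m * a / k * k = m * a := by field_simp
  have hma : m * a ≤ a := by nlinarith
  have key : ∀ S : Set ℝ, MeasurableSet S → (∀ x ∈ S, (E - x < E - y ∧ E - y ≤ k * (E - x)) ∨
      (x < E ∧ E - y < m * (E - x))) → M.real S ≤ ∫ x, gp E p x y ∂M := by
    intro S hS h
    refine measureReal_le_integral (fun x => gp_le_one h1 x y) (fun x => gp_nonneg h0 x y)
      (measurable_gp.comp (measurable_id.prodMk measurable_const)) hS ?_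
    intro x hx
    rw [hk, hm] at h
    rcases h x hx with ⟨h2, h3⟩ | ⟨h2, h3⟩
    · exact gp_eq_one_of_lt h1 h2 h3
    · exact gp_eq_one_of_mul_lt h0 h1 h2 h3
  rcases le_or_gt (E - y) (m * (m * a / k)) with hv1 | hv1
  · refine le_trans ?_ (key (Set.Ioo (E - a) (E - m * a / k)) measurableSet_Ioo ?_)
    · rw [hM.ioo _ _ le_rfl (by linarith) le_rfl, hlr]
      gcongr
      linarith
    · rintro x ⟨hx1, hx2⟩
      exact Or.inr ⟨by linarith, by nlinarith⟩
  have hv0 : 0 < E - y := by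
    have : 0 < m * (m * a / k) := by positivity
    linarith
  have hvm : m * ((E - y) / m) = E - y := by field_simp
  have hvm' : ∀ x, x < E - (E - y) / m → E - y < m * (E - x) := by
    intro x hx
    nlinarith
  have hvm0 : 0 < (E - y) / m := by positivity
  have hvr : m * a / k ≤ (E - y) / m := by
    rw [le_div_iff₀ hm0]
    linarith
  have hlv : Real.log ((E - y) / m) = Real.log (E - y) - Real.log m :=
    Real.log_div hv0.ne' hm0.ne'
  rcases le_or_gt (m * a) (E - y) with hv2 | hv2
  · have hvk : k * ((E - y) / k) = E - y := by field_simp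
    refine le_trans ?_ (key (Set.Ioo (E - (E - y)) (E - (E - y) / k)) measurableSet_Ioo ?_)
    · rw [hM.ioo _ _ (by gcongr) (div_le_self hv0.le hk1.le) hy, Real.log_div hv0.ne' hk0.ne']
      apply le_of_eq
      ring
    · rintro x ⟨hx1, hx2⟩
      exact Or.inl ⟨by linarith, by nlinarith⟩
  have hva : (E - y) / m ≤ a := by
    rw [div_le_iff₀ hm0]
    linarith
  rcases le_or_gt (E - y) (m * a / k) with hv3 | hv3
  · refine le_trans ?_ (key (Set.Ioo (E - a) (E - (E - y) / m)) measurableSet_Ioo ?_)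
    · rw [hM.ioo _ _ hvr hva le_rfl, hlv]
      have := Real.log_le_log hv0 hv3
      gcongr
      linarith
    · rintro x ⟨hx1, hx2⟩
      exact Or.inr ⟨by linarith, hvm' x hx2⟩
  · refine le_trans ?_ (key (Set.Ioo (E - (E - y)) (E - m * a / k) ∪
      Set.Ioo (E - a) (E - (E - y) / m)) (measurableSet_Ioo.union measurableSet_Ioo) ?_)
    · have hvle : E - y ≤ (E - y) / m := le_div_self hv0.le hm0 hm1.le
      rw [measureReal_union _ measurableSet_Ioo, hM.ioo _ _ hvr hva le_rfl,
        hM.ioo _ _ le_rfl hv3.le hy, hlv, hlr]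
      · apply le_of_eq
        ring
      · rw [Set.disjoint_left]
        rintro x ⟨hx1, hx2⟩ ⟨hx3, hx4⟩
        linarith
    · rintro x (⟨hx1, hx2⟩ | ⟨hx1, hx2⟩)
      · exact Or.inl ⟨by linarith, by nlinarith⟩
      · exact Or.inr ⟨by linarith, hvm' x hx2⟩

/-! ### The law with density `f*` -/

lemma Atil_eq (h0 : 0 < p) (h1 : p ≤ 1 / 2) :
    Atil A E p = E - p / (1 + p) * (E - A) / ((2 - p) / (1 - p)) := by
  have : 1 - p ≠ 0 := by linarith
  have : 1 + p ≠ 0 := by linarith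
  have : p + 1 ≠ 0 := by linarith
  have : 2 - p ≠ 0 := by linarith
  unfold Atil
  field_simp
  ring

lemma log_ratio (h0 : 0 < p) (h1 : p ≤ 1 / 2) :
    Real.log (p * (1 - p) / ((2 - p) * (p + 1))) =
      -(Real.log ((2 - p) / (1 - p)) - Real.log (p / (1 + p))) := by
  have h2 : 1 - p ≠ 0 := by linarith
  have h3 : 1 + p ≠ 0 := by linarith
  have h4 : 2 - p ≠ 0 := by linarith
  rw [add_comm p 1, Real.log_div (mul_ne_zero h0.ne' h2) (mul_ne_zero h4 h3),
    Real.log_mul h0.ne' h2, Real.log_mul h4 h3, Real.log_div h4 h2, Real.log_div h0.ne' h3]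
  ring

lemma vval_eq (h0 : 0 < p) (h1 : p ≤ 1 / 2) :
    vval p = Real.log ((2 - p) / (1 - p)) /
      (Real.log ((2 - p) / (1 - p)) - Real.log (p / (1 + p))) := by
  unfold vval
  rw [log_ratio h0 h1, ← inv_div (2 - p), Real.log_inv, neg_div_neg_eq]

lemma one_lt_k (h1 : p ≤ 1 / 2) : 1 < (2 - p) / (1 - p) := by
  rw [lt_div_iff₀ (by linarith)]
  linarith

lemma m_lt_one (h0 : 0 < p) : p / (1 + p) < 1 := by
  rw [div_lt_iff₀ (by linarith)]
  linarith

lemma log_length_pos (h0 : 0 < p) (h1 : p ≤ 1 / 2) :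
    0 < Real.log ((2 - p) / (1 - p)) - Real.log (p / (1 + p)) := by
  have := Real.log_pos (one_lt_k h1)
  have := Real.log_neg (show 0 < p / (1 + p) by positivity) (m_lt_one h0)
  linarith

lemma Atil_lt (h0 : 0 < p) (h1 : p ≤ 1 / 2) (hA : A < E) : Atil A E p < E := by
  rw [Atil_eq h0 h1]
  have : 0 < p / (1 + p) * (E - A) / ((2 - p) / (1 - p)) :=
    div_pos (mul_pos (by positivity) (by linarith)) (by linarith [one_lt_k h1])
  linarith

lemma Cconst_neg (h0 : 0 < p) (h1 : p ≤ 1 / 2) : Cconst p < 0 := by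
  unfold Cconst
  rw [log_ratio h0 h1, inv_neg]
  have := inv_pos.mpr (log_length_pos h0 h1)
  linarith

lemma fstar_nonneg (h0 : 0 < p) (h1 : p ≤ 1 / 2) (hA : A < E) (t : ℝ) : 0 ≤ fstar A E p t := by
  unfold fstar
  split_ifs with h
  · exact div_nonneg_of_nonpos (Cconst_neg h0 h1).le (by linarith [h.2, Atil_lt h0 h1 hA])
  · exact le_rfl

lemma measurable_fstar : Measurable (fstar A E p) := by
  unfold fstar
  exact Measurable.ite measurableSet_Icc (by fun_prop) measurable_const

lemma integral_fstarMeas (h0 : 0 < p) (h1 : p ≤ 1 / 2) (hA : A < E) (g : ℝ → ℝ) :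
    ∫ t, g t ∂(fstarMeas A E p) = ∫ t, g t * fstar A E p t := by
  unfold fstarMeas
  rw [integral_withDensity_eq_integral_toReal_smul
    measurable_fstar.ennreal_ofReal (by simp)]
  refine integral_congr_ae (Filter.Eventually.of_forall fun t => ?_)
  simp [ENNReal.toReal_ofReal (fstar_nonneg h0 h1 hA t), mul_comm]

/-- The density `C / (t - E)` integrates to a difference of logarithms. -/
lemma fstarMeas_Icc (h0 : 0 < p) (h1 : p ≤ 1 / 2) (hA : A < E) {s t : ℝ}
    (hs : E - Atil A E p ≤ s) (hst : s ≤ t) (ht : t ≤ E - A) :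
    (fstarMeas A E p) (Set.Icc (E - t) (E - s)) = ENNReal.ofReal ((Real.log t - Real.log s) /
      (Real.log ((2 - p) / (1 - p)) - Real.log (p / (1 + p)))) := by
  have hs0 : 0 < s := by linarith [Atil_lt h0 h1 hA]
  have hle : E - t ≤ E - s := by linarith
  have heq : Set.EqOn (fstar A E p) (fun y => -Cconst p * (E - y)⁻¹) (Set.Icc (E - t) (E - s)) := by
    rintro y ⟨hy1, hy2⟩
    have hy : y ∈ Set.Icc A (Atil A E p) := ⟨by linarith, by linarith⟩
    simp only [fstar, if_pos hy]
    rw [← neg_sub E y, div_neg, neg_mul, div_eq_mul_inv]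
  have hint : IntegrableOn (fstar A E p) (Set.Icc (E - t) (E - s)) := by
    refine IntegrableOn.congr_fun ?_ heq.symm measurableSet_Icc
    refine ContinuousOn.integrableOn_Icc (ContinuousOn.mul continuousOn_const
      (ContinuousOn.inv₀ (by fun_prop) ?_))
    rintro y ⟨hy1, hy2⟩
    linarith
  unfold fstarMeas
  rw [withDensity_apply _ measurableSet_Icc, ← ofReal_integral_eq_lintegral_ofReal hint
    (Filter.Eventually.of_forall fun t => fstar_nonneg h0 h1 hA t)]
  congr 1
  rw [setIntegral_congr_fun measurableSet_Icc heq, integral_Icc_eq_integral_Ioc,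
    ← intervalIntegral.integral_of_le hle, intervalIntegral.integral_const_mul,
    intervalIntegral.integral_comp_sub_left (fun z => z⁻¹) E, sub_sub_cancel, sub_sub_cancel,
    integral_inv_of_pos hs0 (by linarith), Real.log_div (by linarith) hs0.ne', Cconst,
    log_ratio h0 h1, inv_neg, neg_neg, inv_mul_eq_div]

lemma ae_mem_fstarMeas : ∀ᵐ t ∂(fstarMeas A E p), t ∈ Set.Icc A (Atil A E p) := by
  unfold fstarMeas
  rw [ae_withDensity_iff measurable_fstar.ennreal_ofReal]
  refine Filter.Eventually.of_forall fun t ht => ?_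
  by_contra hc
  simp [fstar, hc] at ht

lemma logUniform_fstarMeas (h0 : 0 < p) (h1 : p ≤ 1 / 2) (hA : A < E) :
    LogUniform (fstarMeas A E p) E (E - A) ((2 - p) / (1 - p)) (p / (1 + p))
      (Real.log ((2 - p) / (1 - p)) - Real.log (p / (1 + p))) := by
  have hL := log_length_pos h0 h1
  have hk := one_lt_k h1
  have hm := m_lt_one h0
  have hm0 : 0 < p / (1 + p) := by positivity
  have hAt : p / (1 + p) * (E - A) / ((2 - p) / (1 - p)) = E - Atil A E p := by
    rw [Atil_eq h0 h1, sub_sub_cancel]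
  have hEA : 0 < E - A := by linarith
  have hEt : E - Atil A E p ≤ E - A := by
    rw [← hAt]
    exact (div_le_self (by positivity) hk.le).trans (by nlinarith)
  have hicc : ∀ s t, E - Atil A E p ≤ s → s ≤ t → t ≤ E - A →
      (fstarMeas A E p).real (Set.Icc (E - t) (E - s)) = (Real.log t - Real.log s) /
        (Real.log ((2 - p) / (1 - p)) - Real.log (p / (1 + p))) := by
    intro s t hs hst ht
    have hs0 : 0 < s := by linarith [Atil_lt h0 h1 hA]
    rw [measureReal_def, fstarMeas_Icc h0 h1 hA hs hst ht, ENNReal.toReal_ofReal]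
    exact div_nonneg (by linarith [Real.log_le_log hs0 hst]) hL.le
  refine ⟨⟨?_⟩, ?_, ?_, ?_⟩
  · have h : (fstarMeas A E p) Set.univ = (fstarMeas A E p) (Set.Icc A (Atil A E p)) := by
      refine measure_congr ?_
      filter_upwards [ae_mem_fstarMeas (A := A) (E := E) (p := p)] with t ht
      exact propext ⟨fun _ => ht, fun _ => trivial⟩
    have h2 := fstarMeas_Icc h0 h1 hA le_rfl hEt le_rfl
    rw [sub_sub_cancel, sub_sub_cancel] at h2
    rw [h, h2, ← hAt, Real.log_div (by positivity) (by positivity),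
      Real.log_mul (by positivity) (by positivity)]
    rw [div_eq_one_iff_eq hL.ne' |>.mpr (by ring), ENNReal.ofReal_one]
  · rw [hAt, sub_sub_cancel, sub_sub_cancel]
    exact ae_mem_fstarMeas
  · rw [hAt]
    exact hicc
  · rw [hAt]
    intro s t hs hst ht
    have : NullSingletonClass (fstarMeas A E p) := by
      unfold fstarMeas
      infer_instance
    rw [← hicc s t hs hst ht]
    exact measureReal_congr Ioo_ae_eq_Icc

end

/-! ### Equilibrium -/

/-- For `p ∈ (0, 1/2]`, the density `f*(t) = C/(t−E)` on `[A,Ã]` is a probability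
density, it guarantees the value `v(p)` to each player, and the pair of measures with
density `f*` is a mixed-strategy Nash equilibrium of the weighted `(p,1−p)` game,
whose value is `v(p)`. -/
theorem explicit_equilibrium_weighted (A E B : ℝ) (hAE : A < E) (hEB : E < B)
    (p : ℝ) (hp : p ∈ Set.Ioc (0 : ℝ) (1 / 2)) :
    (∀ t, 0 ≤ fstar A E p t) ∧
    (∫ t, fstar A E p t = 1) ∧
    (∀ x ∈ Set.Icc A B, ∫ y, gp E p x y * fstar A E p y ≤ vval p) ∧
    (∀ y ∈ Set.Icc A B, vval p ≤ ∫ x, gp E p x y * fstar A E p x) ∧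
    (∫ x, ∫ y, gp E p x y * fstar A E p x * fstar A E p y = vval p) ∧
    IsProbabilityMeasure (fstarMeas A E p) ∧
    (∀ μ : Measure ℝ, IsProbabilityMeasure μ → μ (Set.Icc A B)ᶜ = 0 →
      Gp E p μ (fstarMeas A E p) ≤ vval p) ∧
    (∀ ν : Measure ℝ, IsProbabilityMeasure ν → ν (Set.Icc A B)ᶜ = 0 →
      vval p ≤ Gp E p (fstarMeas A E p) ν) ∧
    Gp E p (fstarMeas A E p) (fstarMeas A E p) = vval p := by
  obtain ⟨h0, h1⟩ := hp
  have ha : 0 < E - A := by linarith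
  have hLU := logUniform_fstarMeas h0 h1 hAE
  have hprob := hLU.prob
  have hk := one_lt_k h1
  have hm := m_lt_one h0
  have hm0 : 0 < p / (1 + p) := by positivity
  have hv0 : 0 ≤ vval p := by
    rw [vval_eq h0 h1]
    exact div_nonneg (Real.log_pos hk).le (log_length_pos h0 h1).le
  have hup : ∀ x, A ≤ x → ∫ y, gp E p x y ∂(fstarMeas A E p) ≤ vval p := by
    intro x hx
    rw [vval_eq h0 h1]
    exact integral_gp_le h0 h1 ha rfl rfl hk hm0 hm rfl hLU (by linarith)
  have hlow : ∀ y, A ≤ y → vval p ≤ ∫ x, gp E p x y ∂(fstarMeas A E p) := by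
    intro y hy
    rw [vval_eq h0 h1]
    exact le_integral_gp h0 h1 ha rfl rfl hk hm0 hm rfl hLU (by linarith)
  have hGup : ∀ μ : Measure ℝ, IsProbabilityMeasure μ → (∀ᵐ x ∂μ, A ≤ x) →
      Gp E p μ (fstarMeas A E p) ≤ vval p := by
    intro μ hμ hμA
    unfold Gp
    calc _ ≤ ∫ _, vval p ∂μ := by
          refine integral_mono_of_nonneg (Filter.Eventually.of_forall fun x =>
            integral_nonneg fun y => gp_nonneg h0 x y) (integrable_const _) ?_
          filter_upwards [hμA] with x hx using hup x hx
      _ = vval p := by simp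
  have hGlow : ∀ ν : Measure ℝ, IsProbabilityMeasure ν → (∀ᵐ y ∂ν, A ≤ y) →
      vval p ≤ Gp E p (fstarMeas A E p) ν := by
    intro ν hν hνA
    have hint : Integrable (Function.uncurry (gp E p)) ((fstarMeas A E p).prod ν) := by
      refine Integrable.of_bound measurable_gp.aestronglyMeasurable 1
        (Filter.Eventually.of_forall fun z => ?_)
      rw [Real.norm_eq_abs, Function.uncurry_def, abs_of_nonneg (gp_nonneg h0 _ _)]
      exact gp_le_one h1 _ _
    unfold Gp
    rw [integral_integral_swap hint]
    calc vval p = ∫ _, vval p ∂ν := by simp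
      _ ≤ _ := by
          refine integral_mono_ae (integrable_const _) hint.integral_prod_right ?_
          filter_upwards [hνA] with y hy using hlow y hy
  have hsupp : ∀ᵐ x ∂(fstarMeas A E p), A ≤ x := by
    filter_upwards [ae_mem_fstarMeas (A := A) (E := E) (p := p)] with x hx using hx.1
  have hGeq : Gp E p (fstarMeas A E p) (fstarMeas A E p) = vval p :=
    le_antisymm (hGup _ hprob hsupp) (hGlow _ hprob hsupp)
  have hae : ∀ μ : Measure ℝ, μ (Set.Icc A B)ᶜ = 0 → ∀ᵐ x ∂μ, A ≤ x := by
    intro μ hμ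
    have : ∀ᵐ x ∂μ, x ∈ Set.Icc A B := hμ
    filter_upwards [this] with x hx using hx.1
  refine ⟨fstar_nonneg h0 h1 hAE, ?_, ?_, ?_, ?_, hprob, fun μ hμ h => hGup μ hμ (hae μ h),
    fun ν hν h => hGlow ν hν (hae ν h), hGeq⟩
  · have := integral_fstarMeas h0 h1 hAE (fun _ => 1)
    simpa using this.symm
  · intro x hx
    rw [← integral_fstarMeas h0 h1 hAE]
    exact hup x hx.1
  · intro y hy
    rw [← integral_fstarMeas h0 h1 hAE (fun x => gp E p x y)]
    exact hlow y hy.1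
  · rw [← hGeq]
    unfold Gp
    rw [integral_fstarMeas h0 h1 hAE]
    refine integral_congr_ae (Filter.Eventually.of_forall fun x => ?_)
    simp only
    rw [integral_fstarMeas h0 h1 hAE, ← integral_mul_const]
    refine integral_congr_ae (Filter.Eventually.of_forall fun y => ?_)
    simp only
    ring
end
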